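/- Let d ≥ 2 and a > 2b > 0, and let y ∈ S₀. Then the solution v_y of the linearized equation satisfies v_y(r) → −∞ and v_y'(r) → −∞ as r → ∞, and the divergence is exponentially fast: there exist constants c > 0 and ε > 0 such that v_y(r) ≤ −c·e^{εr} and v_y'(r) ≤ −c·e^{εr} for all sufficiently large r. -/

import Mathlib

open Real Filter

noncomputable section

/-- The nonlinearity `F(x) = (a/2)·sin(2x)·(sin²x − b/a)`. -/
def Fnl (a b x : ℝ) : ℝ := (a / 2) * Real.sin (2 * x) * (Real.sin x ^ 2 - b / a)

/-- `u` solves the radial ODE `u'' + ((d−1)/r)u' + F(u) = 0` on `(0,∞)` with `u'(0) = 0`. -/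
def IsRadialSol (d : ℕ) (a b : ℝ) (u : ℝ → ℝ) : Prop :=
  ContDiff ℝ 2 u ∧ deriv u 0 = 0 ∧
  ∀ r : ℝ, 0 < r →
    deriv (deriv u) r + (((d : ℝ) - 1) / r) * deriv u r + Fnl a b (u r) = 0

/-- `u` is the family of solutions of the radial ODE with `u y 0 = y`, `(u y)'(0) = 0`. -/
def IsShootingFamily (d : ℕ) (a b : ℝ) (u : ℝ → ℝ → ℝ) : Prop :=
  ∀ y ∈ Set.Ioo (0 : ℝ) (Real.pi / 2), IsRadialSol d a b (u y) ∧ u y 0 = y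

/-- `S₊`: initial data whose solution stays bounded away from zero. -/
def Splus (u : ℝ → ℝ → ℝ) : Set ℝ :=
  {y | y ∈ Set.Ioo (0 : ℝ) (Real.pi / 2) ∧ ∃ ε > (0 : ℝ), ∀ r : ℝ, 0 ≤ r → ε ≤ u y r}

/-- `S₀`: initial data whose solution is positive and tends to zero at infinity. -/
def Szero (u : ℝ → ℝ → ℝ) : Set ℝ :=
  {y | y ∈ Set.Ioo (0 : ℝ) (Real.pi / 2) ∧ (∀ r : ℝ, 0 ≤ r → 0 < u y r) ∧
    Tendsto (u y) atTop (nhds 0)}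

/-- `S₋`: initial data whose solution vanishes at some positive radius. -/
def Sminus (u : ℝ → ℝ → ℝ) : Set ℝ :=
  {y | y ∈ Set.Ioo (0 : ℝ) (Real.pi / 2) ∧ ∃ r > (0 : ℝ), u y r = 0}

/-- `v` solves the linearized equation `v'' + ((d−1)/r)v' + F'(w)v = 0`
with `v(0) = 1`, `v'(0) = 0`. -/
def IsLinearizedSol (d : ℕ) (a b : ℝ) (w v : ℝ → ℝ) : Prop :=
  ContDiff ℝ 2 v ∧ v 0 = 1 ∧ deriv v 0 = 0 ∧
  ∀ r : ℝ, 0 < r →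
    deriv (deriv v) r + (((d : ℝ) - 1) / r) * deriv v r
      + deriv (Fnl a b) (w r) * v r = 0


theorem aux_lt {f f' : ℝ → ℝ} {s t : ℝ} (hst : s < t) (hc : ContinuousOn f (Set.Icc s t))
    (hd : ∀ x ∈ Set.Ioo s t, HasDerivAt f (f' x) x) (hp : ∀ x ∈ Set.Ioo s t, 0 < f' x) :
    f s < f t := by
  obtain ⟨c, hc1, hc2⟩ := exists_hasDerivAt_eq_slope f f' hst hc hd
  have := hp c hc1
  rw [hc2] at this
  have h2 : 0 < t - s := by linarith
  have := (div_pos_iff_of_pos_right h2).1 this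
  linarith

theorem aux_le {f f' : ℝ → ℝ} {s t : ℝ} (hst : s ≤ t) (hc : ContinuousOn f (Set.Icc s t))
    (hd : ∀ x ∈ Set.Ioo s t, HasDerivAt f (f' x) x) (hp : ∀ x ∈ Set.Ioo s t, 0 ≤ f' x) :
    f s ≤ f t := by
  rcases hst.eq_or_lt with h | hst
  · rw [h]
  obtain ⟨c, hc1, hc2⟩ := exists_hasDerivAt_eq_slope f f' hst hc hd
  have := hp c hc1
  rw [hc2] at this
  have h2 : 0 < t - s := by linarith
  by_contra h
  push Not at h
  have : (f t - f s) / (t - s) < 0 := div_neg_of_neg_of_pos (by linarith) h2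
  linarith

theorem aux_gt {f f' : ℝ → ℝ} {s t : ℝ} (hst : s < t) (hc : ContinuousOn f (Set.Icc s t))
    (hd : ∀ x ∈ Set.Ioo s t, HasDerivAt f (f' x) x) (hp : ∀ x ∈ Set.Ioo s t, f' x < 0) :
    f t < f s := by
  have := aux_lt (f := fun x => - f x) (f' := fun x => - f' x) hst hc.neg
    (fun x hx => (hd x hx).neg) (fun x hx => by linarith [hp x hx])
  linarith

theorem aux_ge {f f' : ℝ → ℝ} {s t : ℝ} (hst : s ≤ t) (hc : ContinuousOn f (Set.Icc s t))
    (hd : ∀ x ∈ Set.Ioo s t, HasDerivAt f (f' x) x) (hp : ∀ x ∈ Set.Ioo s t, f' x ≤ 0) :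
    f t ≤ f s := by
  have := aux_le (f := fun x => - f x) (f' := fun x => - f' x) hst hc.neg
    (fun x hx => (hd x hx).neg) (fun x hx => by linarith [hp x hx])
  linarith

theorem aux_first_zero {f : ℝ → ℝ} {s t : ℝ} (hf : Continuous f) (hst : s ≤ t) (hs : 0 < f s)
    (ht : f t ≤ 0) : ∃ c, s < c ∧ c ≤ t ∧ f c = 0 ∧ ∀ x, s ≤ x → x < c → 0 < f x := by
  have hK : IsCompact (Set.Icc s t ∩ {x | f x ≤ 0}) :=
    isCompact_Icc.inter_right (isClosed_le hf continuous_const)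
  obtain ⟨c, hc⟩ := hK.exists_isLeast ⟨t, ⟨⟨hst, le_rfl⟩, ht⟩⟩
  obtain ⟨⟨⟨h1, h2⟩, h3⟩, h4⟩ := hc
  have h3 : f c ≤ 0 := h3
  have hlt : ∀ x, s ≤ x → x < c → 0 < f x := by
    intro x hx hxc
    by_contra h
    push Not at h
    have := h4 ⟨⟨hx, by linarith⟩, h⟩
    linarith
  have hsc : s < c := by
    rcases h1.eq_or_lt with h | h
    · rw [← h] at h3; linarith
    · exact h
  refine ⟨c, hsc, h2, ?_, hlt⟩
  apply le_antisymm h3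
  obtain ⟨x, hx, hx0⟩ := intermediate_value_Icc' h1 hf.continuousOn (show (0:ℝ) ∈ Set.Icc (f c) (f s) from ⟨h3, hs.le⟩)
  rcases hx.2.eq_or_lt with h | h
  · rw [← h, hx0]
  · have := hlt x hx.1 h; linarith

/-- Derivative of the nonlinearity. -/
def F1 (a b x : ℝ) : ℝ :=
  (a / 2) * (2 * Real.cos (2 * x)) * (Real.sin x ^ 2 - b / a)
    + (a / 2) * Real.sin (2 * x) * (2 * Real.sin x * Real.cos x)

def GG (a b x : ℝ) : ℝ := Real.sin x ^ 2 / 4 * (a * Real.sin x ^ 2 - 2 * b)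

theorem hasDerivAt_Fnl (a b x : ℝ) : HasDerivAt (Fnl a b) (F1 a b x) x := by
  unfold Fnl F1
  have h1 : HasDerivAt (fun x : ℝ => Real.sin (2 * x)) (2 * Real.cos (2 * x)) x := by
    have := (Real.hasDerivAt_sin (2 * x)).comp x ((hasDerivAt_id x).const_mul 2)
    refine HasDerivAt.congr_deriv this ?_
    ring
  have h2 := ((Real.hasDerivAt_sin x).pow 2).sub_const (b / a)
  refine HasDerivAt.congr_deriv ((h1.const_mul (a / 2)).mul h2) ?_
  simp

theorem hasDerivAt_GG (a b x : ℝ) (ha : a ≠ 0) : HasDerivAt (GG a b) (Fnl a b x) x := by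
  unfold Fnl GG
  have h2 := ((Real.hasDerivAt_sin x).pow 2)
  refine HasDerivAt.congr_deriv ((h2.div_const 4).mul ((h2.const_mul a).sub_const (2 * b))) ?_
  rw [Real.sin_two_mul]
  simp
  field_simp
  ring

/-- normal form in the double angle -/
theorem Fnl_eq (a b x : ℝ) : Fnl a b x =
    (a / 4) * (Real.sin (2 * x) * ((1 - 2 * (b / a)) - Real.cos (2 * x))) := by
  unfold Fnl
  rw [Real.sin_sq_eq_half_sub]
  ring

theorem F1_eq (a b x : ℝ) : F1 a b x =
    (a / 2) * (Real.cos (2 * x) * ((1 - 2 * (b / a)) - Real.cos (2 * x)) + Real.sin (2 * x) ^ 2) := by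
  unfold F1
  have h : Real.sin (2 * x) = 2 * Real.sin x * Real.cos x := Real.sin_two_mul x
  rw [← h, Real.sin_sq_eq_half_sub]
  ring

theorem t_cos_lt {t : ℝ} (h0 : 0 < t) (h1 : t < π) : t * Real.cos t < Real.sin t := by
  have := aux_lt (f := fun t => Real.sin t - t * Real.cos t) (f' := fun t => t * Real.sin t) h0
    (by fun_prop)
    (fun x hx => by
      refine HasDerivAt.congr_deriv ((Real.hasDerivAt_sin x).sub ((hasDerivAt_id x).mul (Real.hasDerivAt_cos x))) ?_
      simp)
    (fun x hx => mul_pos hx.1 (Real.sin_pos_of_pos_of_lt_pi hx.1 (hx.2.trans h1)))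
  simp at this
  linarith

/-- the quotient `t f'(t) / f(t)` is decreasing where `cos t < c` -/
theorem K_anti {c t' t : ℝ} (hc : c < 1) (h0 : 0 < t') (h1 : t' < t) (h2 : t < π)
    (h3 : Real.cos t' < c) :
    t * (Real.cos t / Real.sin t) + t * Real.sin t / (c - Real.cos t) <
    t' * (Real.cos t' / Real.sin t') + t' * Real.sin t' / (c - Real.cos t') := by
  have hcos : ∀ x ∈ Set.Icc t' t, Real.cos x < c := fun x hx =>
    (Real.cos_le_cos_of_nonneg_of_le_pi h0.le (by linarith [hx.2]) hx.1).trans_lt h3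
  have hsin : ∀ x ∈ Set.Icc t' t, 0 < Real.sin x := fun x hx =>
    Real.sin_pos_of_pos_of_lt_pi (by linarith [hx.1]) (by linarith [hx.2])
  have hder : ∀ x ∈ Set.Icc t' t, HasDerivAt
      (fun t => t * (Real.cos t / Real.sin t) + t * Real.sin t / (c - Real.cos t))
      ((Real.sin x * Real.cos x - x) / Real.sin x ^ 2 +
        ((Real.sin x + x * Real.cos x) * (c - Real.cos x) - x * Real.sin x ^ 2) / (c - Real.cos x) ^ 2) x := by
    intro x hx
    have hs := hsin x hx
    have hcx : c - Real.cos x ≠ 0 := by linarith [hcos x hx]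
    have e1 := (hasDerivAt_id x).mul ((Real.hasDerivAt_cos x).div (Real.hasDerivAt_sin x) hs.ne')
    have e2 := ((hasDerivAt_id x).mul (Real.hasDerivAt_sin x)).div
      ((Real.hasDerivAt_cos x).const_sub c) hcx
    refine HasDerivAt.congr_deriv (e1.add e2) ?_
    simp only [id]
    congr 1
    · have := Real.sin_sq_add_cos_sq x
      simp only [Pi.div_apply]
      field_simp
      linear_combination (-x) * this
    · simp; ring
  apply aux_gt h1 (fun x hx => (hder x hx).continuousAt.continuousWithinAt)
    (fun x hx => hder x (Set.Ioo_subset_Icc_self hx))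
  intro x hx'
  have hx := Set.Ioo_subset_Icc_self hx'
  have hs := hsin x hx
  have hcx : 0 < c - Real.cos x := by linarith [hcos x hx]
  have hx0 : 0 < x := by linarith [hx.1]
  have hsx : Real.sin x < x := Real.sin_lt hx0
  have hc1 := Real.cos_le_one x
  have hA : Real.sin x * Real.cos x - x < 0 := by nlinarith
  have hB : (Real.sin x + x * Real.cos x) * (c - Real.cos x) - x * Real.sin x ^ 2 < 0 := by
    have hsq : Real.sin x ^ 2 = (1 - Real.cos x) * (1 + Real.cos x) := by
      have := Real.sin_sq_add_cos_sq x
      linear_combination this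
    rcases le_or_gt (Real.sin x + x * Real.cos x) 0 with h | h
    · have : 0 < x * Real.sin x ^ 2 := by positivity
      have : (Real.sin x + x * Real.cos x) * (c - Real.cos x) ≤ 0 :=
        mul_nonpos_of_nonpos_of_nonneg h hcx.le
      linarith
    · have e1 : (Real.sin x + x * Real.cos x) * (c - Real.cos x) <
          (Real.sin x + x * Real.cos x) * (1 - Real.cos x) :=
        mul_lt_mul_of_pos_left (by linarith) h
      have e2 : (Real.sin x + x * Real.cos x) * (1 - Real.cos x) ≤
          (x + x * Real.cos x) * (1 - Real.cos x) :=
        mul_le_mul_of_nonneg_right (by linarith) (by linarith)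
      rw [hsq]
      nlinarith
  have := div_neg_of_neg_of_pos hA (pow_pos hs 2)
  have := div_neg_of_neg_of_pos hB (pow_pos hcx 2)
  linarith

/-- abstract properties of the nonlinearity -/
structure NL (b : ℝ) (F F' G : ℝ → ℝ) : Prop where
  hb : 0 < b
  dF : ∀ x, HasDerivAt F (F' x) x
  dG : ∀ x, HasDerivAt G (F x) x
  F0 : F 0 = 0
  G0 : G 0 = 0
  key : ∀ α γ x' x : ℝ, 0 ≤ α → α ≤ γ → 0 < γ → 0 < x' → x' < x → x < π / 2 →
    0 ≤ α * x * F' x - γ * F x → 0 < α * x' * F' x' - γ * F x'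
  Fneg : ∀ x : ℝ, 0 < x → x < π / 2 → F x ≤ 0 → 0 < x * F' x - F x
  Gpos : ∀ x x' : ℝ, 0 < x → x ≤ x' → x' < π / 2 → 0 ≤ G x → 0 < F x'
  near : ∃ δ > 0, ∀ x : ℝ, 0 < x → x < δ → F x ≤ - (b / 2) * x ∧ - (2 * b) * x ≤ F x ∧ F' x ≤ - (b / 2)

theorem NL_Fnl {a b : ℝ} (hb : 0 < b) (hab : 2 * b < a) : NL b (Fnl a b) (F1 a b) (GG a b) := by
  have ha : 0 < a := by linarith
  have hba : 0 < b / a := div_pos hb ha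
  have hc : 1 - 2 * (b / a) < 1 := by linarith
  set c := 1 - 2 * (b / a) with hcdef
  have hneg : ∀ x : ℝ, 0 < x → x < π / 2 → Fnl a b x ≤ 0 → 0 < x * F1 a b x - Fnl a b x := by
    intro x h0 h1 h2
    have hs : 0 < Real.sin (2 * x) := Real.sin_pos_of_pos_of_lt_pi (by linarith) (by linarith)
    have ht : 2 * x * Real.cos (2 * x) < Real.sin (2 * x) := t_cos_lt (by linarith) (by linarith)
    rw [Fnl_eq] at h2 ⊢
    rw [F1_eq]
    simp only [← hcdef] at *
    have hcc : c - Real.cos (2 * x) ≤ 0 := by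
      by_contra h
      push Not at h
      have : 0 < a / 4 * (Real.sin (2 * x) * (c - Real.cos (2 * x))) := by positivity
      linarith
    have h3 : 0 ≤ (2 * x * Real.cos (2 * x) - Real.sin (2 * x)) * (c - Real.cos (2 * x)) :=
      mul_nonneg_of_nonpos_of_nonpos (by linarith) hcc
    have h4 : 0 < 2 * x * Real.sin (2 * x) ^ 2 := by positivity
    have h5 : 0 < (a / 4) * ((2 * x * Real.cos (2 * x) - Real.sin (2 * x)) * (c - Real.cos (2 * x)) + 2 * x * Real.sin (2 * x) ^ 2) := by
      apply mul_pos (by linarith) (by linarith)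
    linarith
  have hF1c : Continuous (F1 a b) := by unfold F1; fun_prop
  have hF10 : F1 a b 0 = -b := by
    unfold F1; simp; field_simp
  have hF0 : Fnl a b 0 = 0 := by unfold Fnl; simp
  refine ⟨hb, hasDerivAt_Fnl a b, fun x => hasDerivAt_GG a b x ha.ne', hF0, by unfold GG; simp, ?_, hneg, ?_, ?_⟩
  · intro α γ x' x hα hαγ hγ h0 h1 h2 h3
    have hsx' : 0 < Real.sin (2 * x') := Real.sin_pos_of_pos_of_lt_pi (by linarith) (by linarith)
    have hsx : 0 < Real.sin (2 * x) := Real.sin_pos_of_pos_of_lt_pi (by linarith) (by linarith)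
    have hcoslt : Real.cos (2 * x) < Real.cos (2 * x') :=
      Real.cos_lt_cos_of_nonneg_of_le_pi (by linarith) (by linarith) (by linarith)
    rcases le_or_gt (Fnl a b x) 0 with h | h
    · have hcc : c - Real.cos (2 * x) ≤ 0 := by
        by_contra h'
        push Not at h'
        rw [Fnl_eq] at h
        have : 0 < a / 4 * (Real.sin (2 * x) * (c - Real.cos (2 * x))) := by positivity
        linarith
      have hF' : Fnl a b x' < 0 := by
        rw [Fnl_eq]
        have : Real.sin (2 * x') * (c - Real.cos (2 * x')) < 0 :=
          mul_neg_of_pos_of_neg hsx' (by linarith)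
        exact mul_neg_of_pos_of_neg (by linarith) this
      have hI := hneg x' h0 (by linarith) hF'.le
      rcases hα.eq_or_lt with h4 | h4
      · rw [← h4]; nlinarith
      · have := mul_pos h4 hI
        nlinarith
    · have hα' : 0 < α := by
        rcases hα.eq_or_lt with h4 | h4
        · rw [← h4] at h3; nlinarith
        · exact h4
      rcases le_or_gt (Fnl a b x') 0 with h' | h'
      · have hI := hneg x' h0 (by linarith) h'
        have := mul_pos hα' hI
        nlinarith
      · have hcc' : 0 < c - Real.cos (2 * x') := by
          by_contra h5
          push Not at h5
          rw [Fnl_eq] at h'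
          have : Real.sin (2 * x') * (c - Real.cos (2 * x')) ≤ 0 :=
            mul_nonpos_of_nonneg_of_nonpos hsx'.le h5
          have := mul_nonpos_of_nonneg_of_nonpos (show 0 ≤ a / 4 by linarith) this
          linarith
        have hcc : 0 < c - Real.cos (2 * x) := by linarith
        have hK := K_anti (t' := 2 * x') (t := 2 * x) hc (by linarith) (by linarith) (by linarith) (by linarith)
        have hform : ∀ z, 0 < Real.sin (2 * z) → 0 < c - Real.cos (2 * z) →
            α * z * F1 a b z - γ * Fnl a b z = Fnl a b z *
            (α * (2 * z * (Real.cos (2 * z) / Real.sin (2 * z)) + 2 * z * Real.sin (2 * z) / (c - Real.cos (2 * z))) - γ) := by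
          intro z hz1 hz2
          rw [F1_eq, Fnl_eq]
          simp only [← hcdef]
          have hz1' := hz1.ne'
          have hz2' := hz2.ne'
          generalize Real.sin (2 * z) = S at *
          generalize Real.cos (2 * z) = C at *
          field_simp
          ring
        rw [hform x hsx hcc] at h3
        rw [hform x' hsx' hcc']
        apply mul_pos h'
        have h6 := nonneg_of_mul_nonneg_right h3 h
        have := mul_lt_mul_of_pos_left hK hα'
        linarith
  · intro x x' h0 h1 h2 h3
    unfold GG at h3
    have hs : 0 < Real.sin x := Real.sin_pos_of_pos_of_lt_pi h0 (by linarith)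
    have hs' : Real.sin x ≤ Real.sin x' := Real.sin_le_sin_of_le_of_le_pi_div_two (by linarith) h2.le h1
    have h4 : 0 ≤ a * Real.sin x ^ 2 - 2 * b := nonneg_of_mul_nonneg_right h3 (by positivity)
    have h5 : Real.sin x ^ 2 ≤ Real.sin x' ^ 2 := by gcongr
    have h6 : 0 < Real.sin x' ^ 2 - b / a := by
      have : b / a < Real.sin x' ^ 2 := by
        rw [div_lt_iff₀ ha]; nlinarith
      linarith
    have h7 : 0 < Real.sin (2 * x') := Real.sin_pos_of_pos_of_lt_pi (by linarith) (by linarith)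
    unfold Fnl
    positivity
  · have h1 : ∀ᶠ x in nhds (0:ℝ), F1 a b x < -(b/2) ∧ -(2*b) < F1 a b x := by
      have := hF1c.tendsto 0
      rw [hF10] at this
      exact (this.eventually_lt_const (by linarith)).and (this.eventually_const_lt (by linarith))
    obtain ⟨δ, hδ, hh⟩ := Metric.eventually_nhds_iff.1 h1
    refine ⟨δ, hδ, fun x hx0 hxδ => ?_⟩
    have hh' : ∀ z, 0 < z → z ≤ x → F1 a b z < -(b/2) ∧ -(2*b) < F1 a b z := by
      intro z hz hz'
      apply hh
      rw [Real.dist_eq, sub_zero, abs_of_pos hz]; linarith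
    obtain ⟨ξ, hξ, he⟩ := exists_hasDerivAt_eq_slope (Fnl a b) (F1 a b) hx0
      (fun z hz => (hasDerivAt_Fnl a b z).continuousAt.continuousWithinAt) (fun z hz => hasDerivAt_Fnl a b z)
    rw [hF0, sub_zero, sub_zero, eq_div_iff hx0.ne'] at he
    have := hh' ξ hξ.1 hξ.2.le
    refine ⟨?_, ?_, (hh' x hx0 le_rfl).1.le⟩
    · rw [← he]; nlinarith
    · rw [← he]; nlinarith

structure USol (n : ℕ) (b y : ℝ) (F F' G u p : ℝ → ℝ) : Prop where
  nl : NL b F F' G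
  hy : y < π / 2
  du : ∀ r, HasDerivAt u (p r) r
  cp : Continuous p
  dp : ∀ r, 0 < r → HasDerivAt p (-(((n:ℝ) + 1) / r) * p r - F (u r)) r
  u0 : u 0 = y
  p0 : p 0 = 0
  upos : ∀ r, 0 ≤ r → 0 < u r
  lim : Tendsto u atTop (nhds 0)

theorem NL.cF {b : ℝ} {F F' G : ℝ → ℝ} (h : NL b F F' G) : Continuous F :=
  continuous_iff_continuousAt.2 fun x => (h.dF x).continuousAt

theorem NL.cG {b : ℝ} {F F' G : ℝ → ℝ} (h : NL b F F' G) : Continuous G :=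
  continuous_iff_continuousAt.2 fun x => (h.dG x).continuousAt

theorem hd_pow (n : ℕ) {r : ℝ} (hr : 0 < r) :
    HasDerivAt (fun r : ℝ => r ^ n) (n * r ^ n / r) r := by
  refine (hasDerivAt_pow n r).congr_deriv ?_
  rcases n with _ | n
  · simp
  · field_simp
    simp
    ring

namespace USol

variable {n : ℕ} {b y : ℝ} {F F' G u p : ℝ → ℝ}

theorem cu (h : USol n b y F F' G u p) : Continuous u :=
  continuous_iff_continuousAt.2 fun x => (h.du x).continuousAt

theorem dFu (h : USol n b y F F' G u p) (r : ℝ) :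
    HasDerivAt (fun r => F (u r)) (F' (u r) * p r) r :=
  (h.nl.dF (u r)).comp r (h.du r)

theorem dGu (h : USol n b y F F' G u p) (r : ℝ) :
    HasDerivAt (fun r => G (u r)) (F (u r) * p r) r :=
  (h.nl.dG (u r)).comp r (h.du r)

theorem Hnonneg (h : USol n b y F F' G u p) {r : ℝ} (hr : 0 ≤ r) :
    0 ≤ p r ^ 2 / 2 + G (u r) := by
  have cu := h.cu
  have cp := h.cp
  have cF := h.nl.cF
  have cG := h.nl.cG
  have hanti : ∀ s, r ≤ s → p s ^ 2 / 2 + G (u s) ≤ p r ^ 2 / 2 + G (u r) := by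
    intro s hs
    apply aux_ge (f := fun r => p r ^ 2 / 2 + G (u r))
      (f' := fun r => -(((n:ℝ) + 1) / r) * p r ^ 2) hs (by fun_prop)
    · intro x hx
      refine ((((h.dp x (by linarith [hx.1])).pow 2).div_const 2).add (h.dGu x)).congr_deriv ?_
      simp
      ring
    · intro x hx
      have : 0 < x := by linarith [hx.1]
      have : 0 ≤ (((n:ℝ) + 1) / x) * p x ^ 2 := by positivity
      linarith
  have hlim : Tendsto (fun s => G (u s)) atTop (nhds 0) := by
    have := (cG.tendsto 0).comp h.lim
    rwa [h.nl.G0] at this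
  apply le_of_tendsto hlim
  filter_upwards [eventually_ge_atTop r] with s hs
  have := hanti s hs
  nlinarith [sq_nonneg (p s)]

theorem Mlt (h : USol n b y F F' G u p) {s t : ℝ} (hs : 0 ≤ s) (hst : s < t)
    (hF : ∀ x ∈ Set.Ioo s t, 0 < F (u x)) : t ^ (n+1) * p t < s ^ (n+1) * p s := by
  have cp := h.cp
  apply aux_gt (f := fun r => r ^ (n+1) * p r) (f' := fun r => - (r ^ (n+1) * F (u r))) hst (by fun_prop)
  · intro x hx
    have hx0 : 0 < x := by linarith [hx.1]
    refine ((hd_pow (n+1) hx0).mul (h.dp x hx0)).congr_deriv ?_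
    push_cast
    field_simp
    ring
  · intro x hx
    have hx0 : 0 < x := by linarith [hx.1]
    have := hF x hx
    have : 0 < x ^ (n+1) * F (u x) := by positivity
    linarith

theorem pneg (h : USol n b y F F' G u p) {r : ℝ} (hr : 0 < r) : p r < 0 := by
  have cu := h.cu
  have cp := h.cp
  have cF := h.nl.cF
  by_contra hpr
  push Not at hpr
  have hy0 : 0 < y := by rw [← h.u0]; exact h.upos 0 le_rfl
  have hFy : 0 < F y := by
    have := h.Hnonneg (le_refl (0:ℝ))
    rw [h.u0, h.p0] at this
    exact h.nl.Gpos y y hy0 le_rfl h.hy (by simpa using this)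
  have hev : ∀ᶠ s in nhds (0:ℝ), 0 < F (u s) := by
    have : Tendsto (fun s => F (u s)) (nhds 0) (nhds (F (u 0))) := (cF.comp cu).tendsto 0
    rw [h.u0] at this
    exact this.eventually_const_lt hFy
  obtain ⟨δ, hδ, hh⟩ := Metric.eventually_nhds_iff.1 hev
  have hnear : ∀ s, 0 < s → s < δ → p s < 0 := by
    intro s hs hs'
    have := h.Mlt le_rfl hs (fun x hx => hh (by
      rw [Real.dist_eq, sub_zero, abs_of_pos hx.1]; linarith [hx.2]))
    rw [h.p0, mul_zero] at this
    exact (pos_iff_neg_of_mul_neg this).1 (by positivity)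
  set s0 := min (δ/2) r with hs0
  have hs0p : 0 < s0 := lt_min (by linarith) hr
  have hs0d : s0 < δ := lt_of_le_of_lt (min_le_left _ _) (by linarith)
  obtain ⟨c, hc1, hc2, hc3, hc4⟩ := aux_first_zero (f := fun r => - p r) cp.neg (min_le_right (δ/2) r)
    (by have := hnear s0 hs0p hs0d; simpa using this) (by simpa using hpr)
  have hc3 : p c = 0 := by simpa using hc3
  have hneg : ∀ x, 0 < x → x < c → p x < 0 := by
    intro x hx hxc
    rcases lt_or_ge x s0 with hh | hh
    · exact hnear x hx (by linarith)
    · have := hc4 x hh hxc; linarith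
  have hc0 : 0 < c := by linarith
  have hGc : 0 ≤ G (u c) := by
    have := h.Hnonneg hc0.le
    rw [hc3] at this
    simpa using this
  have := h.Mlt le_rfl hc0 (fun x hx => by
    refine h.nl.Gpos (u c) (u x) (h.upos c hc0.le) ?_ ?_ hGc
    · exact aux_ge hx.2.le cu.continuousOn (fun z _ => h.du z)
        (fun z hz => (hneg z (by linarith [hz.1, hx.1]) hz.2).le)
    · have : u x ≤ u 0 := aux_ge hx.1.le cu.continuousOn (fun z _ => h.du z)
        (fun z hz => (hneg z hz.1 (by linarith [hz.2, hx.2])).le)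
      rw [h.u0] at this
      linarith [h.hy])
  rw [hc3, h.p0] at this
  simp at this

theorem uanti (h : USol n b y F F' G u p) {s t : ℝ} (hs : 0 ≤ s) (hst : s < t) : u t < u s :=
  aux_gt hst h.cu.continuousOn (fun z _ => h.du z) (fun z hz => h.pneg (by linarith [hz.1]))

theorem ult (h : USol n b y F F' G u p) {s : ℝ} (hs : 0 ≤ s) : u s < π / 2 := by
  have := h.hy
  rcases hs.eq_or_lt with h1 | h1
  · rw [← h1, h.u0]; exact this
  · have := h.uanti le_rfl h1
    rw [h.u0] at this; linarith

theorem far (h : USol n b y F F' G u p) : ∃ R > 0, ∀ r, R ≤ r →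
    F (u r) ≤ -(b/2) * u r ∧ -(2*b) * u r ≤ F (u r) ∧ F' (u r) ≤ -(b/2) := by
  obtain ⟨δ, hδ, hn⟩ := h.nl.near
  obtain ⟨R, hR⟩ := eventually_atTop.1 (h.lim.eventually_lt_const hδ)
  refine ⟨max R 1, by positivity, fun r hr => ?_⟩
  have h1 : R ≤ r := (le_max_left _ _).trans hr
  have h2 : 1 ≤ r := (le_max_right _ _).trans hr
  exact hn _ (h.upos r (by linarith)) (hR r h1)

/-- exponential decay -/
theorem decay (h : USol n b y F F' G u p) : ∃ C k R : ℝ, 0 < k ∧ ∀ r, R ≤ r →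
    u r ≤ C * Real.exp (-(k * r)) ∧ - p r ≤ C * Real.exp (-(k * r)) := by
  obtain ⟨R, hR0, hR⟩ := h.far
  have cu := h.cu
  have cp := h.cp
  have hb := h.nl.hb
  have hA : ∀ r, R ≤ r → (b/2) * u r ≤ -(((n:ℝ) + 1) / r) * p r - F (u r) := by
    intro r hr
    have hr0 : 0 < r := by linarith
    have h1 := (hR r hr).1
    have h2 := h.pneg hr0
    have h3 : 0 < ((n:ℝ) + 1) / r := by positivity
    nlinarith
  have hE : ∀ r, R ≤ r → 0 ≤ p r ^ 2 - (b/2) * u r ^ 2 := by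
    intro r hr
    have hanti : ∀ s, r ≤ s → p s ^ 2 - (b/2) * u s ^ 2 ≤ p r ^ 2 - (b/2) * u r ^ 2 := by
      intro s hs
      apply aux_ge (f := fun r => p r ^ 2 - (b/2) * u r ^ 2)
        (f' := fun r => 2 * p r * ((-(((n:ℝ) + 1) / r) * p r - F (u r)) - (b/2) * u r)) hs (by fun_prop)
      · intro x hx
        refine (((h.dp x (by linarith [hx.1])).pow 2).sub (((h.du x).pow 2).const_mul (b/2))).congr_deriv ?_
        simp
        ring
      · intro x hx
        have := hA x (by linarith [hx.1])
        have h2 := h.pneg (show 0 < x by linarith [hx.1])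
        exact mul_nonpos_of_nonpos_of_nonneg (by linarith) (by linarith)
    have hlim : Tendsto (fun s => - ((b/2) * u s ^ 2)) atTop (nhds 0) := by
      have := ((h.lim.pow 2).const_mul (b/2)).neg
      simpa using this
    apply le_of_tendsto hlim
    filter_upwards [eventually_ge_atTop r] with s hs
    have := hanti s hs
    nlinarith [sq_nonneg (p s)]
  set k := Real.sqrt (b/2) with hk
  have hk0 : 0 < k := Real.sqrt_pos.2 (by linarith)
  have hk2 : k ^ 2 = b/2 := Real.sq_sqrt (by linarith)
  have hp : ∀ r, R ≤ r → p r ≤ - k * u r := by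
    intro r hr
    have h1 := hE r hr
    have h2 := h.pneg (show 0 < r by linarith)
    have h3 := h.upos r (by linarith)
    rw [← hk2] at h1
    have : k * u r ≤ - p r := by
      apply le_of_sq_le_sq _ (by linarith)
      nlinarith
    linarith
  have hu : ∀ r, R ≤ r → Real.exp (k * r) * u r ≤ Real.exp (k * R) * u R := by
    intro r hr
    apply aux_ge (f := fun r => Real.exp (k * r) * u r)
      (f' := fun r => Real.exp (k * r) * (k * u r + p r)) hr (by fun_prop)
    · intro x hx
      refine ((((hasDerivAt_id x).const_mul k).exp).mul (h.du x)).congr_deriv ?_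
      simp
      ring
    · intro x hx
      have := hp x hx.1.le
      exact mul_nonpos_of_nonneg_of_nonpos (Real.exp_pos _).le (by linarith)
  have hu' : ∀ r, R ≤ r → u r ≤ (Real.exp (k * R) * u R) * Real.exp (-(k * r)) := by
    intro r hr
    have := mul_le_mul_of_nonneg_right (hu r hr) (Real.exp_pos (-(k*r))).le
    rw [mul_right_comm, ← Real.exp_add] at this
    simpa using this
  set D := Real.exp (k * R) * u R with hD
  have hD0 : 0 < D := mul_pos (Real.exp_pos _) (h.upos R hR0.le)
  have hk1 : 1 ≤ Real.exp k := Real.one_le_exp hk0.le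
  refine ⟨D * Real.exp k, k, R + 1, hk0, fun r hr => ⟨?_, ?_⟩⟩
  · refine (hu' r (by linarith)).trans ?_
    apply mul_le_mul_of_nonneg_right _ (Real.exp_pos _).le
    nlinarith
  · obtain ⟨ξ, hξ, he⟩ := exists_hasDerivAt_eq_slope u p (show r - 1 < r by linarith)
      cu.continuousOn (fun z _ => h.du z)
    have h1 : p ξ ≤ p r := by
      apply aux_le hξ.2.le cp.continuousOn (fun z hz => h.dp z (by linarith [hz.1, hξ.1]))
      intro z hz
      have h5 := hA z (by linarith [hz.1, hξ.1])
      have h6 := h.upos z (by linarith [hz.1, hξ.1])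
      have : 0 < (b/2) * u z := by positivity
      linarith
    have h2 := hu' (r - 1) (by linarith)
    have h3 := h.upos r (by linarith)
    have h4 : Real.exp (-(k * (r - 1))) = Real.exp k * Real.exp (-(k * r)) := by
      rw [← Real.exp_add]; ring_nf
    rw [h4] at h2
    have : p ξ = u r - u (r - 1) := by rw [he]; simp
    linarith

theorem tendsto_pow_exp (m : ℕ) {k : ℝ} (hk : 0 < k) (C : ℝ) :
    Tendsto (fun r : ℝ => r ^ m * (C * Real.exp (-(k * r)))) atTop (nhds 0) := by
  have h1 := (Real.tendsto_pow_mul_exp_neg_atTop_nhds_zero m).comp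
    (tendsto_id.const_mul_atTop hk)
  have h2 := h1.const_mul (C / k ^ m)
  rw [mul_zero] at h2
  refine h2.congr fun r => ?_
  simp
  field_simp
  ring

theorem limu (h : USol n b y F F' G u p) (m : ℕ) :
    Tendsto (fun r => r ^ m * u r) atTop (nhds 0) := by
  obtain ⟨C, k, R, hk, hh⟩ := h.decay
  refine tendsto_of_tendsto_of_tendsto_of_le_of_le' tendsto_const_nhds (tendsto_pow_exp m hk C) ?_ ?_
  · filter_upwards [eventually_ge_atTop 0] with r hr
    have := h.upos r hr
    positivity
  · filter_upwards [eventually_ge_atTop 0, eventually_ge_atTop R] with r hr hr'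
    exact mul_le_mul_of_nonneg_left (hh r hr').1 (by positivity)

theorem limp (h : USol n b y F F' G u p) (m : ℕ) :
    Tendsto (fun r => r ^ m * p r) atTop (nhds 0) := by
  obtain ⟨C, k, R, hk, hh⟩ := h.decay
  have : Tendsto (fun r => r ^ m * - p r) atTop (nhds 0) := by
    refine tendsto_of_tendsto_of_tendsto_of_le_of_le' tendsto_const_nhds (tendsto_pow_exp m hk C) ?_ ?_
    · filter_upwards [eventually_gt_atTop 0] with r hr
      have := h.pneg hr
      have : 0 < - p r := by linarith
      positivity
    · filter_upwards [eventually_ge_atTop 0, eventually_ge_atTop R] with r hr hr'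
      exact mul_le_mul_of_nonneg_left (hh r hr').2 (by positivity)
  have := this.neg
  simpa using this

/-- single sign change of the Pohozaev density -/
theorem Phi_sign (h : NL b F F' G) (n : ℕ) {x' x : ℝ} (h0 : 0 < x') (h1 : x' < x) (h2 : x < π / 2)
    (h3 : 0 ≤ ((n:ℝ) + 2) * G x' - n / 2 * x' * F x') :
    0 < ((n:ℝ) + 2) * G x - n / 2 * x * F x := by
  have cF := h.cF
  have cG := h.cG
  have hd : ∀ z, HasDerivAt (fun x => ((n:ℝ) + 2) * G x - n / 2 * x * F x)
      (((n:ℝ) + 4) / 2 * F z - n / 2 * z * F' z) z := by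
    intro z
    refine (((h.dG z).const_mul ((n:ℝ)+2)).sub
      (((hasDerivAt_id z).const_mul ((n:ℝ)/2)).mul (h.dF z))).congr_deriv ?_
    simp
    ring
  obtain ⟨ξ, hξ, hξ1⟩ : ∃ ξ ∈ Set.Ioo 0 x', 0 ≤ ((n:ℝ) + 4) / 2 * F ξ - n / 2 * ξ * F' ξ := by
    by_contra hcon
    push Not at hcon
    have := aux_gt (f := fun x => ((n:ℝ) + 2) * G x - n / 2 * x * F x) h0 (by fun_prop)
      (fun z _ => hd z) hcon
    simp only [h.G0, h.F0] at this
    simp at this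
    linarith
  have := aux_lt (f := fun x => ((n:ℝ) + 2) * G x - n / 2 * x * F x) h1 (by fun_prop)
      (fun z _ => hd z) (fun z hz => by
        by_contra hcon
        push Not at hcon
        have := h.key (n/2) (((n:ℝ)+4)/2) ξ z (by positivity) (by linarith) (by positivity) hξ.1
          (hξ.2.trans hz.1) (hz.2.trans h2) (by linarith)
        linarith)
  linarith

theorem Qnonneg (h : USol n b y F F' G u p) {r : ℝ} (hr : 0 < r) :
    0 ≤ r ^ (n+2) * (p r ^ 2 / 2 + G (u r)) + n / 2 * r ^ (n+1) * (u r * p r) := by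
  have cu := h.cu
  have cp := h.cp
  have cG := h.nl.cG
  have hd : ∀ x, 0 < x → HasDerivAt
      (fun r => r ^ (n+2) * (p r ^ 2 / 2 + G (u r)) + n / 2 * r ^ (n+1) * (u r * p r))
      (x ^ (n+1) * (((n:ℝ) + 2) * G (u x) - n / 2 * u x * F (u x))) x := by
    intro x hx
    refine (((hd_pow (n+2) hx).mul ((((h.dp x hx).pow 2).div_const 2).add (h.dGu x))).add
      (((hd_pow (n+1) hx).const_mul ((n:ℝ)/2)).mul ((h.du x).mul (h.dp x hx)))).congr_deriv ?_
    simp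
    field_simp
    ring
  rcases le_or_gt 0 (((n:ℝ) + 2) * G (u r) - n / 2 * u r * F (u r)) with hs | hs
  · have := aux_le (f := fun r => r ^ (n+2) * (p r ^ 2 / 2 + G (u r)) + n / 2 * r ^ (n+1) * (u r * p r))
      hr.le (by fun_prop) (fun x hx => hd x hx.1) (fun x hx => by
        have := Phi_sign h.nl n (h.upos r hr.le) (h.uanti hx.1.le hx.2) (h.ult hx.1.le) hs
        have hx := hx.1
        positivity)
    simpa using this
  · have hanti : ∀ s, r ≤ s → s ^ (n+2) * (p s ^ 2 / 2 + G (u s)) + n / 2 * s ^ (n+1) * (u s * p s)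
        ≤ r ^ (n+2) * (p r ^ 2 / 2 + G (u r)) + n / 2 * r ^ (n+1) * (u r * p r) := by
      intro s hrs
      refine aux_ge (f := fun r => r ^ (n+2) * (p r ^ 2 / 2 + G (u r)) + n / 2 * r ^ (n+1) * (u r * p r))
        hrs (by fun_prop) (fun x hx => hd x (by linarith [hx.1])) (fun x hx => ?_)
      have hx0 : 0 < x := by linarith [hx.1]
      have : ((n:ℝ) + 2) * G (u x) - n / 2 * u x * F (u x) < 0 := by
        by_contra hcon
        push Not at hcon
        have := Phi_sign h.nl n (h.upos x hx0.le) (h.uanti hr.le hx.1) (h.ult hr.le) hcon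
        linarith
      exact mul_nonpos_of_nonneg_of_nonpos (by positivity) this.le
    have hlim : Tendsto (fun s => (n:ℝ) / 2 * (u s * (s ^ (n+1) * p s))) atTop (nhds 0) := by
      have := (h.lim.mul (h.limp (n+1))).const_mul ((n:ℝ)/2)
      simpa using this
    apply le_of_tendsto hlim
    filter_upwards [eventually_ge_atTop r] with s hs
    have h1 := hanti s hs
    have hs0 : 0 ≤ s := by linarith
    have h2 := mul_nonneg (pow_nonneg hs0 (n+2)) (h.Hnonneg hs0)
    linarith

theorem Pnonneg (h : USol n b y F F' G u p) {r : ℝ} (hr : 0 < r) :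
    0 ≤ r ^ (n+2) * (p r ^ 2 + u r * F (u r)) + n * r ^ (n+1) * (u r * p r) := by
  have cu := h.cu
  have cp := h.cp
  have cF := h.nl.cF
  have cG := h.nl.cG
  have hu0 := h.upos r hr.le
  rcases le_or_gt 0 (u r * F' (u r) - F (u r)) with hs | hs
  · have h1 : 0 ≤ u r * F (u r) - 2 * G (u r) := by
      have := aux_le (f := fun x => x * F x - 2 * G x) (f' := fun x => x * F' x - F x) hu0.le
        (by fun_prop) (fun x _ => by
          refine (((hasDerivAt_id x).mul (h.nl.dF x)).sub ((h.nl.dG x).const_mul 2)).congr_deriv ?_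
          simp; ring) (fun x hx => by
          have := h.nl.key 1 1 x (u r) (by norm_num) le_rfl (by norm_num) hx.1 hx.2 (h.ult hr.le) (by linarith)
          linarith)
      simp only [h.nl.F0, h.nl.G0] at this
      simpa using this
    have h2 := h.Qnonneg hr
    have h3 : 0 ≤ r ^ (n+2) * (u r * F (u r) - 2 * G (u r)) := by positivity
    linarith
  · have := aux_le (f := fun r => r ^ (n+2) * (p r ^ 2 + u r * F (u r)) + n * r ^ (n+1) * (u r * p r))
      (f' := fun r => 2 * r ^ (n+1) * u r * F (u r) + r ^ (n+2) * p r * (u r * F' (u r) - F (u r)))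
      hr.le (by fun_prop) (fun x hx => by
        have hx := hx.1
        refine (((hd_pow (n+2) hx).mul (((h.dp x hx).pow 2).add ((h.du x).mul (h.dFu x)))).add
          (((hd_pow (n+1) hx).const_mul (n:ℝ)).mul ((h.du x).mul (h.dp x hx)))).congr_deriv ?_
        simp
        field_simp
        ring) (fun x hx => by
        have hx0 := hx.1
        have hux := h.upos x hx0.le
        have hI : u x * F' (u x) - F (u x) < 0 := by
          by_contra hcon
          push Not at hcon
          have := h.nl.key 1 1 (u r) (u x) (by norm_num) le_rfl (by norm_num) hu0 (h.uanti hx0.le hx.2)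
            (h.ult hx0.le) (by linarith)
          linarith
        have hF : 0 < F (u x) := by
          by_contra hcon
          push Not at hcon
          have := h.nl.Fneg (u x) hux (h.ult hx0.le) hcon
          linarith
        have h1 : 0 ≤ 2 * x ^ (n+1) * u x * F (u x) := by positivity
        have h2 : 0 < p x * (u x * F' (u x) - F (u x)) := mul_pos_of_neg_of_neg (h.pneg hx0) hI
        have h3 : 0 ≤ x ^ (n+2) * (p x * (u x * F' (u x) - F (u x))) := by positivity
        linarith)
    simpa using this

theorem theta_mono (h : USol n b y F F' G u p) {r s : ℝ} (hr : 0 < r) (hrs : r ≤ s) :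
    - r * p r / u r ≤ - s * p s / u s := by
  have cu := h.cu
  have cp := h.cp
  refine aux_le (f := fun r => - r * p r / u r)
    (f' := fun r => (r ^ (n+2) * (p r ^ 2 + u r * F (u r)) + n * r ^ (n+1) * (u r * p r)) / (r ^ (n+1) * u r ^ 2))
    hrs (ContinuousOn.div (by fun_prop) (by fun_prop) (fun x hx => (h.upos x (by linarith [hx.1])).ne')) ?_ ?_
  · intro x hx
    have hx0 : 0 < x := by linarith [hx.1]
    have hux := h.upos x hx0.le
    refine ((((hasDerivAt_id x).neg).mul (h.dp x hx0)).div (h.du x) hux.ne').congr_deriv ?_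
    simp
    field_simp
    ring
  · intro x hx
    have hx0 : 0 < x := by linarith [hx.1]
    have hux := h.upos x hx0.le
    exact div_nonneg (h.Pnonneg hx0) (by positivity)

end USol

structure VSol (n : ℕ) (F' u v z : ℝ → ℝ) : Prop where
  dv : ∀ r, HasDerivAt v (z r) r
  cz : Continuous z
  dz : ∀ r, 0 < r → HasDerivAt z (-(((n:ℝ) + 1) / r) * z r - F' (u r) * v r) r
  v0 : v 0 = 1
  z0 : z 0 = 0

theorem VSol.cv {n : ℕ} {F' u v z : ℝ → ℝ} (g : VSol n F' u v z) : Continuous v :=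
  continuous_iff_continuousAt.2 fun x => (g.dv x).continuousAt

theorem VSol.dN {n : ℕ} {F' u v z : ℝ → ℝ} (g : VSol n F' u v z) {x : ℝ} (hx : 0 < x) :
    HasDerivAt (fun r => r ^ (n+1) * z r) (- (x ^ (n+1) * (F' (u x) * v x))) x := by
  refine ((hd_pow (n+1) hx).mul (g.dz x hx)).congr_deriv ?_
  push_cast
  field_simp
  ring

section

variable {n : ℕ} {b y : ℝ} {F F' G u p v z : ℝ → ℝ}

/-- Wronskian with `u'` -/
theorem dWr (h : USol n b y F F' G u p) (g : VSol n F' u v z) {x : ℝ} (hx : 0 < x) :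
    HasDerivAt (fun r => -((n:ℝ)+1) * r ^ n * (p r * v r) - r ^ (n+1) * (F (u r) * v r + p r * z r))
      (((n:ℝ)+1) * x ^ (n+1) * (p x * v x) / x ^ 2) x := by
  refine ((((hd_pow n hx).const_mul (-((n:ℝ)+1))).mul ((h.dp x hx).mul (g.dv x))).sub
    ((hd_pow (n+1) hx).mul (((h.dFu x).mul (g.dv x)).add ((h.dp x hx).mul (g.dz x hx))))).congr_deriv ?_
  simp
  field_simp
  ring

theorem Wr_neg (h : USol n b y F F' G u p) (g : VSol n F' u v z) {s t : ℝ} (hs : 0 ≤ s) (hst : s < t)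
    (hv : ∀ x, s < x → x < t → 0 < v x) :
    -((n:ℝ)+1) * t ^ n * (p t * v t) - t ^ (n+1) * (F (u t) * v t + p t * z t) <
    -((n:ℝ)+1) * s ^ n * (p s * v s) - s ^ (n+1) * (F (u s) * v s + p s * z s) := by
  have cu := h.cu
  have cp := h.cp
  have cF := h.nl.cF
  have cv := g.cv
  have cz := g.cz
  refine aux_gt (f := fun r => -((n:ℝ)+1) * r ^ n * (p r * v r) - r ^ (n+1) * (F (u r) * v r + p r * z r))
    hst (by fun_prop) (fun x hx => dWr h g (by linarith [hx.1])) (fun x hx => ?_)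
  have hx0 : 0 < x := by linarith [hx.1]
  have h1 : p x * v x < 0 := mul_neg_of_neg_of_pos (h.pneg hx0) (hv x hx.1 hx.2)
  exact div_neg_of_neg_of_pos (mul_neg_of_pos_of_neg (by positivity) h1) (by positivity)

theorem Wr_neg0 (h : USol n b y F F' G u p) (g : VSol n F' u v z) {t : ℝ} (ht : 0 < t)
    (hv : ∀ x, 0 < x → x < t → 0 < v x) :
    -((n:ℝ)+1) * t ^ n * (p t * v t) - t ^ (n+1) * (F (u t) * v t + p t * z t) < 0 := by
  have := Wr_neg h g le_rfl ht hv
  rw [h.p0] at this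
  simpa using this

theorem exists_zero (h : USol n b y F F' G u p) (g : VSol n F' u v z) : ∃ r, 0 ≤ r ∧ v r ≤ 0 := by
  by_contra hcon
  push Not at hcon
  have cp := h.cp
  have cv := g.cv
  have cz := g.cz
  have hWr : ∀ t, 0 < t → -((n:ℝ)+1) * t ^ n * (p t * v t) - t ^ (n+1) * (F (u t) * v t + p t * z t) < 0 :=
    fun t ht => Wr_neg0 h g ht (fun x hx _ => hcon x hx.le)
  have hlimp : Tendsto p atTop (nhds 0) := by simpa using h.limp 0
  -- v tends to zero
  have hratio : ∀ r, 1 ≤ r → v 1 / p 1 ≤ v r / p r := by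
    intro r hr
    refine aux_le (f := fun r => v r / p r)
      (f' := fun t => -(-((n:ℝ)+1) * t ^ n * (p t * v t) - t ^ (n+1) * (F (u t) * v t + p t * z t)) / (t ^ (n+1) * p t ^ 2))
      hr (ContinuousOn.div (by fun_prop) (by fun_prop) (fun x hx => (h.pneg (by linarith [hx.1])).ne)) ?_ ?_
    · intro x hx
      have hx0 : 0 < x := by linarith [hx.1]
      have hp := (h.pneg hx0).ne
      refine ((g.dv x).div (h.dp x hx0) hp).congr_deriv ?_
      field_simp
      ring
    · intro x hx
      have hx0 : 0 < x := by linarith [hx.1]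
      have hp := (h.pneg hx0).ne
      have := hWr x hx0
      exact div_nonneg (by linarith) (by positivity)
  have hvlim : Tendsto v atTop (nhds 0) := by
    have hl : Tendsto (fun r => (v 1 / p 1) * p r) atTop (nhds 0) := by
      simpa using hlimp.const_mul (v 1 / p 1)
    refine tendsto_of_tendsto_of_tendsto_of_le_of_le' tendsto_const_nhds hl ?_ ?_
    · filter_upwards [eventually_ge_atTop 0] with r hr using (hcon r hr).le
    · filter_upwards [eventually_ge_atTop 1] with r hr
      have h1 := h.pneg (show 0 < r by linarith)
      have h2 := mul_le_mul_of_nonpos_right (hratio r hr) h1.le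
      rwa [div_mul_cancel₀ _ h1.ne] at h2
  obtain ⟨R0, hR0, hR0'⟩ := h.far
  set R := max R0 1 with hRdef
  have hR1 : 1 ≤ R := le_max_right _ _
  have hR : ∀ r, R ≤ r → F (u r) ≤ -(b/2) * u r ∧ -(2*b) * u r ≤ F (u r) ∧ F' (u r) ≤ -(b/2) :=
    fun r hr => hR0' r ((le_max_left _ _).trans hr)
  have hb := h.nl.hb
  have hN : ∀ r s, R ≤ r → r ≤ s → r ^ (n+1) * z r ≤ s ^ (n+1) * z s := by
    intro r s hr hrs
    refine aux_le (f := fun r => r ^ (n+1) * z r) hrs (by fun_prop)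
      (fun x hx => g.dN (by linarith [hx.1])) (fun x hx => ?_)
    have hx0 : 0 < x := by linarith [hx.1]
    have h1 := (hR x (by linarith [hx.1])).2.2
    have h2 := hcon x hx0.le
    have h3 : F' (u x) * v x ≤ 0 := mul_nonpos_of_nonpos_of_nonneg (by linarith) h2.le
    have : x ^ (n+1) * (F' (u x) * v x) ≤ 0 := mul_nonpos_of_nonneg_of_nonpos (by positivity) h3
    linarith
  have hz : ∀ r, R ≤ r → z r ≤ 0 := by
    intro r hr
    by_contra hzr
    push Not at hzr
    have hr0 : 0 < r := by linarith
    have hzs : ∀ s, r ≤ s → 0 < z s := by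
      intro s hs
      have h1 := hN r s hr hs
      have h2 : 0 < r ^ (n+1) * z r := by positivity
      have hs0 : 0 < s := by linarith
      exact pos_of_mul_pos_right (lt_of_lt_of_le h2 h1) (by positivity)
    have hvs : ∀ s, r ≤ s → v r ≤ v s := fun s hs =>
      aux_le hs cv.continuousOn (fun x _ => g.dv x) (fun x hx => (hzs x hx.1.le).le)
    have : v r ≤ 0 := by
      apply ge_of_tendsto hvlim
      filter_upwards [eventually_ge_atTop r] with s hs using hvs s hs
    linarith [hcon r hr0.le]
  -- contradiction
  set c := -((n:ℝ)+1) * R ^ n * (p R * v R) - R ^ (n+1) * (F (u R) * v R + p R * z R) with hc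
  have hcneg : c < 0 := hWr R (by linarith)
  have hfin : ∀ r, R < r → - p r * (R ^ (n+1) * z R) ≤ c := by
    intro r hr
    have hr0 : 0 < r := by linarith
    have h1 := Wr_neg h g (show 0 ≤ R by linarith) hr (fun x hx _ => hcon x (by linarith))
    rw [← hc] at h1
    have h2 := hN R r le_rfl hr.le
    have h3 := h.pneg hr0
    have h4 := (hR r hr.le).1
    have h5 := hcon r hr0.le
    have h6 := h.upos r hr0.le
    have h7 : F (u r) < 0 := by nlinarith
    have h8 : 0 ≤ ((n:ℝ)+1) * r ^ n * (-(p r) * v r) := by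
      have : 0 < - p r := by linarith
      positivity
    have h9 : 0 ≤ r ^ (n+1) * (-F (u r) * v r) := by
      have : 0 < - F (u r) := by linarith
      positivity
    have h10 : - p r * (R ^ (n+1) * z R) ≤ - p r * (r ^ (n+1) * z r) :=
      mul_le_mul_of_nonneg_left h2 (by linarith)
    nlinarith
  have hlim : Tendsto (fun r => - p r * (R ^ (n+1) * z R)) atTop (nhds 0) := by
    simpa using hlimp.neg.mul_const (R ^ (n+1) * z R)
  have : 0 ≤ c := by
    apply le_of_tendsto hlim
    filter_upwards [eventually_gt_atTop R] with r hr using hfin r hr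
  linarith

theorem dq (h : USol n b y F F' G u p) (g : VSol n F' u v z) (lam : ℝ) {x : ℝ} (hx : 0 < x) :
    HasDerivAt (fun r => r ^ (n+1) * (((lam - n) * p r - r * F (u r)) * v r - (r * p r + lam * u r) * z r))
      (x ^ (n+1) * (v x * (lam * u x * F' (u x) - (lam + 2) * F (u x)))) x := by
  refine ((hd_pow (n+1) hx).mul (((((h.dp x hx).const_mul (lam - n)).sub
    ((hasDerivAt_id x).mul (h.dFu x))).mul (g.dv x)).sub
    ((((hasDerivAt_id x).mul (h.dp x hx)).add ((h.du x).const_mul lam)).mul (g.dz x hx)))).congr_deriv ?_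
  simp
  field_simp
  ring

theorem grow (h : USol n b y F F' G u p) (g : VSol n F' u v z) {R : ℝ} (hR0 : 0 < R)
    (hR : ∀ r, R ≤ r → F' (u r) ≤ -(b/2)) (hv : ∀ r, R ≤ r → v r < 0) (hz : z R < 0) :
    ∃ c > (0 : ℝ), ∃ ε > (0 : ℝ), ∀ r, R ≤ r →
      v r ≤ -c * Real.exp (ε * r) ∧ z r ≤ -c * Real.exp (ε * r) := by
  have cv := g.cv
  have cz := g.cz
  have hb := h.nl.hb
  have hvR := hv R le_rfl
  have hzneg : ∀ r, R ≤ r → z r < 0 := by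
    intro r hr
    have : r ^ (n+1) * z r ≤ R ^ (n+1) * z R := by
      refine aux_ge (f := fun r => r ^ (n+1) * z r) hr (by fun_prop)
        (fun x hx => g.dN (by linarith [hx.1])) (fun x hx => ?_)
      have hx0 : 0 < x := by linarith [hx.1]
      have h1 := hR x hx.1.le
      have h2 := hv x hx.1.le
      have h3 : 0 < F' (u x) * v x := mul_pos_of_neg_of_neg (by linarith) h2
      have : 0 < x ^ (n+1) * (F' (u x) * v x) := by positivity
      linarith
    have h2 : R ^ (n+1) * z R < 0 := mul_neg_of_pos_of_neg (by positivity) hz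
    have hr0 : 0 < r := by linarith
    exact (pos_iff_neg_of_mul_neg (lt_of_le_of_lt this h2)).1 (by positivity)
  set δ := ((n:ℝ)+1) / R with hδ
  have hδ0 : 0 < δ := by positivity
  obtain ⟨ε, hε0, hε1, hε2, hε3⟩ : ∃ ε > 0, ε ≤ 1 ∧ ε ≤ b / 2 / (δ + 1) ∧ ε ≤ z R / v R := by
    have h3 : 0 < z R / v R := div_pos_of_neg_of_neg hz hvR
    have h2 : 0 < b / 2 / (δ + 1) := by positivity
    exact ⟨min 1 (min (b / 2 / (δ + 1)) (z R / v R)), lt_min one_pos (lt_min h2 h3), min_le_left _ _,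
      (min_le_right _ _).trans (min_le_left _ _), (min_le_right _ _).trans (min_le_right _ _)⟩
  have hε2' : ε * (δ + ε) ≤ b / 2 := by
    rw [le_div_iff₀ (by positivity)] at hε2
    nlinarith
  have hε3' : z R - ε * v R ≤ 0 := by
    have := mul_le_mul_of_nonpos_right hε3 hvR.le
    rw [div_mul_cancel₀ _ hvR.ne] at this
    linarith
  have hzv : ∀ r, R ≤ r → z r ≤ ε * v r := by
    intro r hr
    have : Real.exp ((δ + ε) * r) * (z r - ε * v r) ≤ Real.exp ((δ + ε) * R) * (z R - ε * v R) := by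
      refine aux_ge (f := fun r => Real.exp ((δ + ε) * r) * (z r - ε * v r))
        (f' := fun r => Real.exp ((δ + ε) * r) * ((δ - ((n:ℝ)+1)/r) * z r - (ε * (δ + ε) + F' (u r)) * v r))
        hr (by fun_prop) (fun x hx => ?_) (fun x hx => ?_)
      · refine ((((hasDerivAt_id x).const_mul (δ + ε)).exp).mul
          ((g.dz x (by linarith [hx.1])).sub ((g.dv x).const_mul ε))).congr_deriv ?_
        simp
        ring
      · have hx0 : 0 < x := by linarith [hx.1]
        have e1 : ((n:ℝ)+1)/x ≤ δ := by
          rw [hδ]; gcongr; exact hx.1.le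
        have e2 : (δ - ((n:ℝ)+1)/x) * z x ≤ 0 :=
          mul_nonpos_of_nonneg_of_nonpos (by linarith) (hzneg x hx.1.le).le
        have e3 : 0 ≤ (ε * (δ + ε) + F' (u x)) * v x :=
          mul_nonneg_of_nonpos_of_nonpos (by linarith [hR x hx.1.le]) (hv x hx.1.le).le
        exact mul_nonpos_of_nonneg_of_nonpos (Real.exp_pos _).le (by linarith)
    have h2 : Real.exp ((δ + ε) * R) * (z R - ε * v R) ≤ 0 :=
      mul_nonpos_of_nonneg_of_nonpos (Real.exp_pos _).le hε3'
    have h3 := nonpos_of_mul_nonpos_right (this.trans h2) (Real.exp_pos _)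
    linarith
  have hvexp : ∀ r, R ≤ r → v r ≤ (Real.exp (-(ε * R)) * v R) * Real.exp (ε * r) := by
    intro r hr
    have : Real.exp (-(ε * r)) * v r ≤ Real.exp (-(ε * R)) * v R := by
      refine aux_ge (f := fun r => Real.exp (-(ε * r)) * v r)
        (f' := fun r => Real.exp (-(ε * r)) * (z r - ε * v r)) hr (by fun_prop) (fun x hx => ?_) (fun x hx => ?_)
      · refine (((((hasDerivAt_id x).const_mul ε).neg).exp).mul (g.dv x)).congr_deriv ?_
        simp
        ring
      · exact mul_nonpos_of_nonneg_of_nonpos (Real.exp_pos _).le (by linarith [hzv x hx.1.le])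
    have := mul_le_mul_of_nonneg_right this (Real.exp_pos (ε * r)).le
    rw [mul_right_comm, ← Real.exp_add] at this
    simpa using this
  have hc0 : 0 < Real.exp (-(ε * R)) * - v R := mul_pos (Real.exp_pos _) (by linarith)
  refine ⟨ε * (Real.exp (-(ε * R)) * - v R), by positivity, ε, hε0, fun r hr => ?_⟩
  have h1 := hvexp r hr
  have h2 := hzv r hr
  have h3 : 0 < (Real.exp (-(ε * R)) * - v R) * Real.exp (ε * r) := mul_pos hc0 (Real.exp_pos _)
  constructor
  · nlinarith
  · nlinarith

theorem main_aux (h : USol n b y F F' G u p) (g : VSol n F' u v z) :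
    ∃ c > (0 : ℝ), ∃ ε > (0 : ℝ), ∃ R : ℝ, ∀ r, R ≤ r →
      v r ≤ -c * Real.exp (ε * r) ∧ z r ≤ -c * Real.exp (ε * r) := by
  have cu := h.cu
  have cp := h.cp
  have cF := h.nl.cF
  have cv := g.cv
  have cz := g.cz
  have hb := h.nl.hb
  obtain ⟨t, ht0, htv⟩ := exists_zero h g
  obtain ⟨r0, hr0, -, hvr0, hvpos⟩ := aux_first_zero cv ht0 (by rw [g.v0]; norm_num) htv
  have hu0 := h.upos r0 hr0.le
  have hp0 := h.pneg hr0
  have hz0 : z r0 < 0 := by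
    have := Wr_neg0 h g hr0 (fun x hx hx' => hvpos x hx.le hx')
    rw [hvr0] at this
    have h1 : 0 < r0 ^ (n+1) * (p r0 * z r0) := by linarith
    have h2 : 0 < p r0 * z r0 := pos_of_mul_pos_right h1 (by positivity)
    exact (neg_iff_neg_of_mul_pos h2).1 hp0
  set lam := - r0 * p r0 / u r0 with hlam
  have hlam0 : 0 < lam := div_pos (by nlinarith) hu0
  have hw0 : r0 * p r0 + lam * u r0 = 0 := by
    rw [hlam, div_mul_cancel₀ _ hu0.ne']; ring
  have hw : ∀ r, r0 ≤ r → r * p r + lam * u r ≤ 0 := by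
    intro r hr
    have h1 := h.theta_mono hr0 hr
    rw [← hlam, le_div_iff₀ (h.upos r (by linarith))] at h1
    linarith
  -- sign of I
  obtain ⟨x, hx, hxI⟩ : ∃ x ∈ Set.Ioo 0 r0, 0 ≤ lam * u x * F' (u x) - (lam + 2) * F (u x) := by
    by_contra hcon
    push Not at hcon
    have := aux_gt (f := fun r => r ^ (n+1) * (((lam - n) * p r - r * F (u r)) * v r - (r * p r + lam * u r) * z r))
      hr0 (by fun_prop) (fun x hx => dq h g lam hx.1) (fun x hx => by
        have h1 := hcon x hx
        have h2 := hvpos x hx.1.le hx.2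
        exact mul_neg_of_pos_of_neg (pow_pos hx.1 _) (mul_neg_of_pos_of_neg h2 h1))
    simp only [hvr0, hw0] at this
    simp at this
  have hI : ∀ r, r0 ≤ r → 0 < lam * u r * F' (u r) - (lam + 2) * F (u r) := by
    intro r hr
    exact h.nl.key lam (lam+2) (u r) (u x) hlam0.le (by linarith) (by linarith) (h.upos r (by linarith))
      (h.uanti hx.1.le (by linarith [hx.2])) (h.ult hx.1.le) hxI
  have hq : ∀ s t, r0 ≤ s → s < t → (∀ x, s < x → x < t → v x < 0) →
      t ^ (n+1) * (((lam - n) * p t - t * F (u t)) * v t - (t * p t + lam * u t) * z t) <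
      s ^ (n+1) * (((lam - n) * p s - s * F (u s)) * v s - (s * p s + lam * u s) * z s) := by
    intro s t hs hst hvn
    refine aux_gt (f := fun r => r ^ (n+1) * (((lam - n) * p r - r * F (u r)) * v r - (r * p r + lam * u r) * z r))
      hst (by fun_prop) (fun x hx => dq h g lam (by linarith [hx.1])) (fun x hx => ?_)
    exact mul_neg_of_pos_of_neg (pow_pos (by linarith [hx.1]) _)
      (mul_neg_of_neg_of_pos (hvn x hx.1 hx.2) (hI x (by linarith [hx.1])))
  have hq0 : ∀ t, r0 < t → (∀ x, r0 < x → x < t → v x < 0) →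
      t ^ (n+1) * (((lam - n) * p t - t * F (u t)) * v t - (t * p t + lam * u t) * z t) < 0 := by
    intro t ht hvn
    have := hq r0 t le_rfl ht hvn
    simpa [hvr0, hw0] using this
  have hloc : ∀ r, z r < 0 → ∃ δ > 0, ∀ s, |s - r| < δ → z s < 0 := by
    intro r hr
    obtain ⟨δ, hδ, hh⟩ := Metric.eventually_nhds_iff.1 ((cz.tendsto r).eventually_lt_const hr)
    exact ⟨δ, hδ, fun s hs => hh (by rwa [Real.dist_eq])⟩
  have hvneg : ∀ r, r0 < r → v r < 0 := by
    obtain ⟨δ, hδ, hh⟩ := hloc r0 hz0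
    have hnear : ∀ s, r0 < s → s < r0 + δ → v s < 0 := by
      intro s hs hs'
      rw [← hvr0]
      refine aux_gt hs cv.continuousOn (fun x _ => g.dv x) (fun x hx => hh x ?_)
      rw [abs_lt]; constructor <;> linarith [hx.1, hx.2]
    intro r hr
    by_contra hvr
    push Not at hvr
    set s0 := min (r0 + δ/2) r with hs0
    have hs0p : r0 < s0 := lt_min (by linarith) hr
    have hs0d : s0 < r0 + δ := lt_of_le_of_lt (min_le_left _ _) (by linarith)
    obtain ⟨c, hc1, hc2, hc3, hc4⟩ := aux_first_zero (f := fun r => - v r) cv.neg (min_le_right (r0 + δ/2) r)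
      (by have := hnear s0 hs0p hs0d; simpa using this) (by simpa using hvr)
    have hc3 : v c = 0 := by simpa using hc3
    have hneg : ∀ x, r0 < x → x < c → v x < 0 := by
      intro x hx hxc
      rcases lt_or_ge x s0 with hh | hh
      · exact hnear x hx (by linarith)
      · have := hc4 x hh hxc; linarith
    have hrc : r0 < c := by linarith
    have hzc : 0 ≤ z c := by
      by_contra hcon
      push Not at hcon
      obtain ⟨η, hη, hh⟩ := hloc c hcon
      set s := max (c - η/2) ((r0 + c)/2) with hs
      have hs1 : c - η/2 ≤ s := le_max_left _ _
      have hs2 : (r0 + c)/2 ≤ s := le_max_right _ _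
      have hs3 : s < c := max_lt (by linarith) (by linarith)
      have h1 : v c < v s := by
        refine aux_gt hs3 cv.continuousOn (fun x _ => g.dv x) (fun x hx => hh x ?_)
        rw [abs_lt]; constructor <;> linarith [hx.1, hx.2]
      have h2 := hneg s (by linarith) hs3
      linarith
    have h1 := hq0 c hrc hneg
    rw [hc3] at h1
    have h2 := hw c hrc.le
    have h3 : (c * p c + lam * u c) * z c ≤ 0 := mul_nonpos_of_nonpos_of_nonneg h2 hzc
    have hc0 : 0 < c := by linarith
    have h4 : 0 ≤ c ^ (n+1) * (-((c * p c + lam * u c) * z c)) :=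
      mul_nonneg (by positivity) (by linarith)
    simp at h1
    linarith
  obtain ⟨R0, hR00, hR0⟩ := h.far
  set R := max R0 (r0 + 1) with hRdef
  have hRr : r0 + 1 ≤ R := le_max_right _ _
  have hR : ∀ r, R ≤ r → F (u r) ≤ -(b/2) * u r ∧ -(2*b) * u r ≤ F (u r) ∧ F' (u r) ≤ -(b/2) :=
    fun r hr => hR0 r ((le_max_left _ _).trans hr)
  by_cases hcase : ∃ r, R ≤ r ∧ z r < 0
  · obtain ⟨r, hr, hzr⟩ := hcase
    obtain ⟨c, hc, ε, hε, hh⟩ := grow h g (show 0 < r by linarith) (fun s hs => (hR s (by linarith)).2.2)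
      (fun s hs => hvneg s (by linarith)) hzr
    exact ⟨c, hc, ε, hε, r, hh⟩
  · exfalso
    push Not at hcase
    have hRr0 : r0 < R := by linarith
    set c := R ^ (n+1) * (((lam - n) * p R - R * F (u R)) * v R - (R * p R + lam * u R) * z R) with hc
    have hcneg : c < 0 := hq0 R hRr0 (fun x hx _ => hvneg x hx)
    have hvR := hvneg R hRr0
    -- limit of r^(n+1) w'
    have hlF : Tendsto (fun r => r ^ (n+2) * F (u r)) atTop (nhds 0) := by
      refine tendsto_of_tendsto_of_tendsto_of_le_of_le' (g := fun r => -(2*b) * (r ^ (n+2) * u r))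
        (h := fun r => -(b/2) * (r ^ (n+2) * u r)) ?_ ?_ ?_ ?_
      · simpa using (h.limu (n+2)).const_mul (-(2*b))
      · simpa using (h.limu (n+2)).const_mul (-(b/2))
      · filter_upwards [eventually_ge_atTop R] with r hr
        have hr0' : 0 ≤ r := by linarith
        have := mul_le_mul_of_nonneg_left (hR r hr).2.1 (pow_nonneg hr0' (n+2))
        linarith
      · filter_upwards [eventually_ge_atTop R] with r hr
        have hr0' : 0 ≤ r := by linarith
        have := mul_le_mul_of_nonneg_left (hR r hr).1 (pow_nonneg hr0' (n+2))
        linarith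
    have hlw : Tendsto (fun r => |(lam - n) * (r ^ (n+1) * p r) - r ^ (n+2) * F (u r)| * v R) atTop (nhds 0) := by
      have := ((((h.limp (n+1)).const_mul (lam - n)).sub hlF).abs).mul_const (v R)
      simpa using this
    have : 0 ≤ c := by
      apply le_of_tendsto hlw
      filter_upwards [eventually_gt_atTop R] with r hr
      have hr0' : 0 < r := by linarith
      have h1 := hq R r hRr0.le hr (fun x hx _ => hvneg x (by linarith))
      rw [← hc] at h1
      have h2 := hw r (by linarith)
      have h3 := hcase r hr.le
      have h4 : 0 ≤ r ^ (n+1) * (-((r * p r + lam * u r) * z r)) :=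
        mul_nonneg (by positivity) (by nlinarith)
      have h5 : v R ≤ v r := aux_le hr.le cv.continuousOn (fun x _ => g.dv x) (fun x hx => hcase x hx.1.le)
      have h6 := hvneg r (by linarith)
      set W := (lam - n) * (r ^ (n+1) * p r) - r ^ (n+2) * F (u r) with hW
      have h7 : W * v r < c := by
        have : r ^ (n+1) * (((lam - n) * p r - r * F (u r)) * v r - (r * p r + lam * u r) * z r) =
          W * v r + r ^ (n+1) * (-((r * p r + lam * u r) * z r)) := by rw [hW]; ring
        linarith
      have h8 : |W| * v R ≤ W * v r := by
        have := le_abs_self W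
        have := abs_nonneg W
        nlinarith
      linarith
    linarith

end

theorem linearized_solution_diverges (d : ℕ) (hd : 2 ≤ d) (a b : ℝ)
    (hb : 0 < b) (hab : 2 * b < a)
    (u : ℝ → ℝ → ℝ) (hfam : IsShootingFamily d a b u)
    (y : ℝ) (hy : y ∈ Szero u)
    (v : ℝ → ℝ) (hv : IsLinearizedSol d a b (u y) v) :
    Tendsto v atTop atBot ∧ Tendsto (deriv v) atTop atBot ∧
    ∃ c > (0 : ℝ), ∃ ε > (0 : ℝ), ∀ᶠ r in atTop,
      v r ≤ -c * Real.exp (ε * r) ∧ deriv v r ≤ -c * Real.exp (ε * r) := by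
  obtain ⟨n, rfl⟩ : ∃ n, d = n + 2 := ⟨d - 2, by omega⟩
  obtain ⟨hyI, hupos, hulim⟩ := hy
  obtain ⟨⟨hu2, hu0', hueq⟩, huy⟩ := hfam y hyI
  obtain ⟨hv2, hv0, hv0', hveq⟩ := hv
  have hreg : ∀ f : ℝ → ℝ, ContDiff ℝ 2 f → (∀ r, HasDerivAt f (deriv f r) r) ∧
      Continuous (deriv f) ∧ ∀ r, HasDerivAt (deriv f) (deriv (deriv f) r) r := by
    intro f hf
    have h1 : ContDiff ℝ 1 (deriv f) :=
      ((contDiff_succ_iff_deriv (n := 1)).1 (by simpa [one_add_one_eq_two] using hf)).2.2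
    exact ⟨fun r => (hf.differentiable (by norm_num) r).hasDerivAt, h1.continuous,
      fun r => (h1.differentiable (by norm_num) r).hasDerivAt⟩
  obtain ⟨u1, u2, u3⟩ := hreg _ hu2
  obtain ⟨v1, v2, v3⟩ := hreg _ hv2
  have hU : USol n b y (Fnl a b) (F1 a b) (GG a b) (u y) (deriv (u y)) :=
    ⟨NL_Fnl hb hab, hyI.2, u1, u2, fun r hr => (u3 r).congr_deriv (by
      have := hueq r hr
      push_cast at this
      have e : ((n:ℝ) + 2 - 1) = n + 1 := by ring
      rw [e] at this
      linarith), huy, hu0', hupos, hulim⟩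
  have hV : VSol n (F1 a b) (u y) v (deriv v) :=
    ⟨v1, v2, fun r hr => (v3 r).congr_deriv (by
      have := hveq r hr
      push_cast at this
      have e : ((n:ℝ) + 2 - 1) = n + 1 := by ring
      rw [e, (hasDerivAt_Fnl a b (u y r)).deriv] at this
      linarith), hv0, hv0'⟩
  obtain ⟨c, hc, ε, hε, R, hh⟩ := main_aux hU hV
  have hlim : Tendsto (fun r : ℝ => -c * Real.exp (ε * r)) atTop atBot :=
    (Real.tendsto_exp_atTop.comp (tendsto_id.const_mul_atTop hε)).const_mul_atTop_of_neg (by linarith)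
  have hev : ∀ᶠ r in atTop, v r ≤ -c * Real.exp (ε * r) ∧ deriv v r ≤ -c * Real.exp (ε * r) := by
    filter_upwards [eventually_ge_atTop R] with r hr using hh r hr
  exact ⟨tendsto_atBot_mono' _ (hev.mono fun r h => h.1) hlim,
    tendsto_atBot_mono' _ (hev.mono fun r h => h.2) hlim, c, hc, ε, hε, hev⟩
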